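/- Let C be a regular Ord-category and f: X→Y a morphism. (a) If f is an so-morphism, then f_*∘f^* ≅ I_Y. (b) If moreover the preorder ≼ on each hom-set of C is a partial order, then f is an so-morphism if and only if f_*∘f^* ≅ I_Y. -/

import Mathlib

open CategoryTheory

universe w v u

/-- An `Ord`-enrichment of a category: a preorder on each hom-set,
preserved by composition on both sides. -/
class OrdEnrichment (C : Type u) [Category.{v} C] : Type (max u v) where
  ord : ∀ {X Y : C}, (X ⟶ Y) → (X ⟶ Y) → Prop
  ord_refl : ∀ {X Y : C} (f : X ⟶ Y), ord f f
  ord_trans : ∀ {X Y : C} {f g h : X ⟶ Y}, ord f g → ord g h → ord f h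
  precomp_ord : ∀ {X Y Z : C} (e : X ⟶ Y) {f g : Y ⟶ Z}, ord f g → ord (e ≫ f) (e ≫ g)
  postcomp_ord : ∀ {X Y Z : C} {f g : X ⟶ Y} (h : Y ⟶ Z), ord f g → ord (f ≫ h) (g ≫ h)

/-- The preorder on hom-sets of an `Ord`-category. -/
def homLe {C : Type u} [Category.{v} C] [OrdEnrichment C] {X Y : C} (f g : X ⟶ Y) : Prop :=
  OrdEnrichment.ord f g

infixl:50 " ≼ " => homLe

section

variable {C : Type u} [Category.{v} C] [OrdEnrichment C]

/-- A full (ff-) morphism. -/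
def IsFF {X Y : C} (m : X ⟶ Y) : Prop :=
  ∀ {A : C} (a a' : A ⟶ X), (a ≫ m) ≼ (a' ≫ m) → a ≼ a'

/-- An ff-monomorphism: a full monomorphism. -/
def IsFFMono {X Y : C} (m : X ⟶ Y) : Prop := IsFF m ∧ Mono m

/-- An so-morphism: a morphism left orthogonal to every ff-monomorphism. -/
def IsSO {A B : C} (e : A ⟶ B) : Prop :=
  ∀ {X Y : C} (m : X ⟶ Y), IsFFMono m → ∀ (u : A ⟶ X) (v : B ⟶ Y),
    u ≫ m = e ≫ v → ∃ d : B ⟶ X, e ≫ d = u ∧ d ≫ m = v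

/-- The (strict) comma object square for the ordered pair `(f, g)`. -/
structure IsCommaSq {X Y Z : C} (f : X ⟶ Y) (g : Z ⟶ Y) (P : C)
    (π₁ : P ⟶ X) (π₂ : P ⟶ Z) : Prop where
  le : (π₁ ≫ f) ≼ (π₂ ≫ g)
  lift : ∀ {A : C} (α : A ⟶ X) (β : A ⟶ Z), (α ≫ f) ≼ (β ≫ g) →
    ∃! h : A ⟶ P, h ≫ π₁ = α ∧ h ≫ π₂ = β
  lift_ord : ∀ {A : C} {h h' : A ⟶ P}, (h ≫ π₁) ≼ (h' ≫ π₁) → (h ≫ π₂) ≼ (h' ≫ π₂) → h ≼ h'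

/-- A 2-pullback square (pullback with the `Ord`-enriched universal property). -/
structure Is2Pullback {X Y Z : C} (f : X ⟶ Z) (g : Y ⟶ Z) (P : C)
    (p : P ⟶ X) (q : P ⟶ Y) : Prop where
  comm : p ≫ f = q ≫ g
  lift : ∀ {A : C} (a : A ⟶ X) (b : A ⟶ Y), a ≫ f = b ≫ g →
    ∃! h : A ⟶ P, h ≫ p = a ∧ h ≫ q = b
  lift_ord : ∀ {A : C} {h h' : A ⟶ P}, (h ≫ p) ≼ (h' ≫ p) → (h ≫ q) ≼ (h' ≫ q) → h ≼ h'

/-- A binary 2-product. -/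
structure Is2Product (X Y : C) (P : C) (p : P ⟶ X) (q : P ⟶ Y) : Prop where
  lift : ∀ {A : C} (a : A ⟶ X) (b : A ⟶ Y), ∃! h : A ⟶ P, h ≫ p = a ∧ h ≫ q = b
  lift_ord : ∀ {A : C} {h h' : A ⟶ P}, (h ≫ p) ≼ (h' ≫ p) → (h ≫ q) ≼ (h' ≫ q) → h ≼ h'

/-- A 2-equalizer. -/
structure Is2Equalizer {X Y : C} (f g : X ⟶ Y) (E : C) (i : E ⟶ X) : Prop where
  comm : i ≫ f = i ≫ g
  lift : ∀ {A : C} (a : A ⟶ X), a ≫ f = a ≫ g → ∃! h : A ⟶ E, h ≫ i = a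
  lift_ord : ∀ {A : C} {h h' : A ⟶ E}, (h ≫ i) ≼ (h' ≫ i) → h ≼ h'

/-- A bicoinserter of a parallel pair. -/
structure IsBicoinserter {X A E : C} (a b : X ⟶ A) (e : A ⟶ E) : Prop where
  le : (a ≫ e) ≼ (b ≫ e)
  desc : ∀ {F : C} (f : A ⟶ F), (a ≫ f) ≼ (b ≫ f) →
    ∃ t : E ⟶ F, (e ≫ t) ≼ f ∧ f ≼ (e ≫ t)
  desc_ord : ∀ {F : C} {f f' : A ⟶ F} {t t' : E ⟶ F},
    (e ≫ t) ≼ f → f ≼ (e ≫ t) → (e ≫ t') ≼ f' → f' ≼ (e ≫ t') → f ≼ f' → t ≼ t'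

/-- A relation from `X` to `Y` in an `Ord`-category: a jointly ff-monomorphic span. -/
structure RelStr (X Y : C) : Type (max u v) where
  obj : C
  p : obj ⟶ X
  q : obj ⟶ Y
  jointly_ff : ∀ {A : C} (a a' : A ⟶ obj), (a ≫ p) ≼ (a' ≫ p) → (a ≫ q) ≼ (a' ≫ q) → a ≼ a'
  jointly_mono : ∀ {A : C} (a a' : A ⟶ obj), a ≫ p = a' ≫ p → a ≫ q = a' ≫ q → a = a'

/-- `(x, y) ∈_A R`. -/
def RelStr.Mem {X Y : C} (R : RelStr X Y) {A : C} (x : A ⟶ X) (y : A ⟶ Y) : Prop :=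
  ∃ h : A ⟶ R.obj, h ≫ R.p = x ∧ h ≫ R.q = y

/-- `R ⊆ S`: `R` factors through `S` (over `X × Y`). -/
def RelStr.Sub {X Y : C} (R S : RelStr X Y) : Prop :=
  ∃ φ : R.obj ⟶ S.obj, φ ≫ S.p = R.p ∧ φ ≫ S.q = R.q

/-- `R ≅ S`: mutual factorisation. -/
def RelStr.Iso {X Y : C} (R S : RelStr X Y) : Prop := R.Sub S ∧ S.Sub R

/-- The opposite relation `R°`. -/
def RelStr.op {X Y : C} (R : RelStr X Y) : RelStr Y X where
  obj := R.obj
  p := R.q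
  q := R.p
  jointly_ff := fun a a' h1 h2 => R.jointly_ff a a' h2 h1
  jointly_mono := fun a a' h1 h2 => R.jointly_mono a a' h2 h1

/-- A relation is an (order) ideal when it is closed under lowering the first
coordinate and raising the second coordinate. -/
def IsIdealRel {X Y : C} (R : RelStr X Y) : Prop :=
  ∀ {A : C} (x x' : A ⟶ X) (y y' : A ⟶ Y), x' ≼ x → R.Mem x y → y ≼ y' → R.Mem x' y'

/-- The relation `f_♯` given by the span `(1_X, f)`. -/
def sharpRel {X Y : C} (f : X ⟶ Y) : RelStr X Y where
  obj := X
  p := 𝟙 X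
  q := f
  jointly_ff := fun a a' h1 _ => by simpa using h1
  jointly_mono := fun a a' h1 _ => by simpa using h1

/-- The relation `f°`, the opposite of `f_♯`. -/
def cosharpRel {X Y : C} (f : X ⟶ Y) : RelStr Y X := (sharpRel f).op

/-- `M` is the meet (intersection) `R ∧ S` of two relations. -/
def IsMeetRel {X Y : C} (R S M : RelStr X Y) : Prop :=
  M.Sub R ∧ M.Sub S ∧
    ∀ {A : C} (x : A ⟶ X) (y : A ⟶ Y), R.Mem x y → S.Mem x y → M.Mem x y

/-- `T` is the composite `S ∘ R` of the relations `R : X ↬ Y` and `S : Y ↬ Z`,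
obtained via the (so-morphism, ff-monomorphism) factorisation of the span
given by the 2-pullback over the middle object. -/
def IsCompositeRel {X Y Z : C} (R : RelStr X Y) (S : RelStr Y Z) (T : RelStr X Z) : Prop :=
  ∃ (P : C) (p₁ : P ⟶ R.obj) (p₂ : P ⟶ S.obj) (e : P ⟶ T.obj),
    Is2Pullback R.q S.p P p₁ p₂ ∧ IsSO e ∧ e ≫ T.p = p₁ ≫ R.p ∧ e ≫ T.q = p₂ ≫ S.q

/-- `R` is the ideal `f_* = f / 1_Y : X ↬ Y`. -/
def IsStarRel {X Y : C} (f : X ⟶ Y) (R : RelStr X Y) : Prop :=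
  IsCommaSq f (𝟙 Y) R.obj R.p R.q

/-- `R` is the ideal `f^* = 1_Y / f : Y ↬ X`. -/
def IsCostarRel {X Y : C} (f : X ⟶ Y) (R : RelStr Y X) : Prop :=
  IsCommaSq (𝟙 Y) f R.obj R.p R.q

/-- `R` is the identity ideal `I_X = 1_X / 1_X`. -/
def IsIdRel (X : C) (R : RelStr X X) : Prop :=
  IsCommaSq (𝟙 X) (𝟙 X) R.obj R.p R.q

/-- `S` is the 2-pullback of the relation `R ↣ X × Y` along `f × g`. -/
def IsRelPullback {X Y U V : C} (R : RelStr X Y) (f : U ⟶ X) (g : V ⟶ Y)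
    (S : RelStr U V) : Prop :=
  ∃ h : S.obj ⟶ R.obj, h ≫ R.p = S.p ≫ f ∧ h ≫ R.q = S.q ≫ g ∧
    ∀ {A : C} (a : A ⟶ U) (b : A ⟶ V) (c : A ⟶ R.obj),
      c ≫ R.p = a ≫ f → c ≫ R.q = b ≫ g →
      ∃ d : A ⟶ S.obj, d ≫ S.p = a ∧ d ≫ S.q = b ∧ d ≫ h = c

/-- A binary 2-coproduct. -/
structure Is2Coproduct (X Y : C) (P : C) (i : X ⟶ P) (j : Y ⟶ P) : Prop where
  desc : ∀ {A : C} (a : X ⟶ A) (b : Y ⟶ A), ∃! h : P ⟶ A, i ≫ h = a ∧ j ≫ h = b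
  desc_ord : ∀ {A : C} {h h' : P ⟶ A}, (i ≫ h) ≼ (i ≫ h') → (j ≫ h) ≼ (j ≫ h') → h ≼ h'

/-- A ternary 2-coproduct. -/
structure Is3Coproduct (X Y Z : C) (P : C) (i : X ⟶ P) (j : Y ⟶ P) (k : Z ⟶ P) : Prop where
  desc : ∀ {A : C} (a : X ⟶ A) (b : Y ⟶ A) (c : Z ⟶ A),
    ∃! h : P ⟶ A, i ≫ h = a ∧ j ≫ h = b ∧ k ≫ h = c
  desc_ord : ∀ {A : C} {h h' : P ⟶ A},
    (i ≫ h) ≼ (i ≫ h') → (j ≫ h) ≼ (j ≫ h') → (k ≫ h) ≼ (k ≫ h') → h ≼ h'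

/-- Reflexivity of a relation on `X`: the diagonal factors through it. -/
def ReflexiveRel {X : C} (R : RelStr X X) : Prop := R.Mem (𝟙 X) (𝟙 X)

/-- Transitivity of a relation on `X`: `R ∘ R ⊆ R`. -/
def TransitiveRel {X : C} (R : RelStr X X) : Prop :=
  ∀ T : RelStr X X, IsCompositeRel R R T → T.Sub R

/-- A congruence: a reflexive and transitive ideal. -/
def IsCongruence {X : C} (R : RelStr X X) : Prop :=
  IsIdealRel R ∧ ReflexiveRel R ∧ TransitiveRel R

/-- An effective congruence: `R ≅ f^* ∘ f_*` for some morphism `f`. -/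
def EffectiveCongruence {X : C} (R : RelStr X X) : Prop :=
  ∃ (Y : C) (f : X ⟶ Y) (Fstar : RelStr X Y) (Fco : RelStr Y X) (T : RelStr X X),
    IsStarRel f Fstar ∧ IsCostarRel f Fco ∧ IsCompositeRel Fstar Fco T ∧ R.Iso T

/-- The `Ord`-enriched difunctionality property of a relation. -/
def OrdDifunctional {X Y : C} (D : RelStr X Y) : Prop :=
  ∀ {A : C} (x u u' : A ⟶ X) (y y' v : A ⟶ Y),
    D.Mem x y → y ≼ y' → D.Mem u y' → u ≼ u' → D.Mem u' v → D.Mem x v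

end

/-- A regular `Ord`-category: finite weighted limits, an
(so-morphism, ff-monomorphism) factorisation system, so-morphisms stable under
2-pullbacks, and every so-morphism the bicoinserter of its comma object projections. -/
structure IsRegularOrd (C : Type u) [Category.{v} C] [OrdEnrichment C] : Prop where
  hasTerminal : ∃ T : C, ∀ A : C, ∃ f : A ⟶ T, ∀ g : A ⟶ T, g = f
  has2Products : ∀ X Y : C, ∃ (P : C) (p : P ⟶ X) (q : P ⟶ Y), Is2Product X Y P p q
  has2Equalizers : ∀ {X Y : C} (f g : X ⟶ Y), ∃ (E : C) (i : E ⟶ X), Is2Equalizer f g E i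
  has2Pullbacks : ∀ {X Y Z : C} (f : X ⟶ Z) (g : Y ⟶ Z),
    ∃ (P : C) (p : P ⟶ X) (q : P ⟶ Y), Is2Pullback f g P p q
  hasCommaObjects : ∀ {X Y Z : C} (f : X ⟶ Y) (g : Z ⟶ Y),
    ∃ (P : C) (p : P ⟶ X) (q : P ⟶ Z), IsCommaSq f g P p q
  fact : ∀ {X Y : C} (f : X ⟶ Y), ∃ (I : C) (e : X ⟶ I) (m : I ⟶ Y),
    IsSO e ∧ IsFFMono m ∧ e ≫ m = f
  so_pullback_stable : ∀ {X Y Z P : C} (f : X ⟶ Z) (g : Y ⟶ Z) (p : P ⟶ X) (q : P ⟶ Y),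
    Is2Pullback f g P p q → IsSO g → IsSO p
  so_bicoinserter : ∀ {A B P : C} (e : A ⟶ B), IsSO e →
    ∀ (π₁ π₂ : P ⟶ A), IsCommaSq e e P π₁ π₂ → IsBicoinserter π₁ π₂ e

/-- An `Ord`-Mal'tsev category: every ideal is `Ord`-difunctional. -/
def IsOrdMaltsev (C : Type u) [Category.{v} C] [OrdEnrichment C] : Prop :=
  ∀ (X Y : C) (D : RelStr X Y), IsIdealRel D → OrdDifunctional D

/-- An `Ord`-W-Mal'tsev object: every ideal is `Ord`-difunctional with respect to
generalised elements with domain `Y`. -/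
def IsOrdWMaltsevObj {C : Type u} [Category.{v} C] [OrdEnrichment C] (Y : C) : Prop :=
  ∀ (X Z : C) (R : RelStr X Z), IsIdealRel R →
    ∀ (x u u' : Y ⟶ X) (z z' v : Y ⟶ Z),
      R.Mem x z → z ≼ z' → R.Mem u z' → u ≼ u' → R.Mem u' v → R.Mem x v


theorem so_order_epi {C : Type u} [Category.{v} C] [OrdEnrichment C] (hC : IsRegularOrd C)
    {A B D : C} (e : A ⟶ B) (he : IsSO e) (t t' : B ⟶ D) (h : (e ≫ t) ≼ (e ≫ t')) : t ≼ t' := by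
  obtain ⟨P, a, b, hP⟩ := hC.hasCommaObjects e e
  exact (hC.so_bicoinserter e he a b hP).desc_ord (OrdEnrichment.ord_refl _)
    (OrdEnrichment.ord_refl _) (OrdEnrichment.ord_refl _) (OrdEnrichment.ord_refl _) h

theorem so_part_a {C : Type u} [Category.{v} C] [OrdEnrichment C] (hC : IsRegularOrd C)
    {X Y : C} (f : X ⟶ Y)
    (IY : RelStr Y Y) (hIY : IsIdRel Y IY)
    (Fstar : RelStr X Y) (hFstar : IsStarRel f Fstar)
    (Fco : RelStr Y X) (hFco : IsCostarRel f Fco) (hf : IsSO f)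
    (T : RelStr Y Y) (hT : IsCompositeRel Fco Fstar T) : T.Iso IY := by
  obtain ⟨P, p₁, p₂, e, hP, he, e1, e2⟩ := hT
  constructor
  · have h1 := OrdEnrichment.precomp_ord p₁ hFco.le
    have h2 := OrdEnrichment.precomp_ord p₂ hFstar.le
    simp only [Category.comp_id] at h1 h2
    have hc : p₁ ≫ Fco.q ≫ f = p₂ ≫ Fstar.p ≫ f := by
      rw [← Category.assoc, hP.comm, Category.assoc]
    rw [hc, ← e1] at h1
    rw [← e2] at h2
    have h3 := so_order_epi hC e he T.p T.q (OrdEnrichment.ord_trans h1 h2)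
    obtain ⟨k, hk, _⟩ := hIY.lift T.p T.q (by simpa using h3)
    exact ⟨k, hk⟩
  · obtain ⟨Q, g, x, hQ⟩ := hC.has2Pullbacks IY.p f
    have hg : IsSO g := hC.so_pullback_stable _ _ _ _ hQ hf
    have hle := hIY.le
    simp only [Category.comp_id] at hle
    obtain ⟨k₁, ⟨k11, k12⟩, _⟩ := hFco.lift (g ≫ IY.p) x (by
      rw [Category.comp_id, hQ.comm]; exact OrdEnrichment.ord_refl _)
    obtain ⟨k₂, ⟨k21, k22⟩, _⟩ := hFstar.lift x (g ≫ IY.q) (by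
      rw [Category.comp_id, ← hQ.comm]; exact OrdEnrichment.precomp_ord g hle)
    obtain ⟨k, ⟨hk1, hk2⟩, _⟩ := hP.lift k₁ k₂ (by rw [k12, k21])
    obtain ⟨W, a, b, hW⟩ := hC.has2Products Y Y
    obtain ⟨m, ⟨m1, m2⟩, _⟩ := hW.lift T.p T.q
    obtain ⟨n, ⟨n1, n2⟩, _⟩ := hW.lift IY.p IY.q
    have hm : IsFFMono m := by
      refine ⟨fun {A} s s' h => T.jointly_ff s s' ?_ ?_, ⟨fun {A} s s' h => T.jointly_mono s s' ?_ ?_⟩⟩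
      · have := OrdEnrichment.postcomp_ord a h
        simp only [Category.assoc, m1] at this; exact this
      · have := OrdEnrichment.postcomp_ord b h
        simp only [Category.assoc, m2] at this; exact this
      · have := congrArg (· ≫ a) h
        simpa only [Category.assoc, m1] using this
      · have := congrArg (· ≫ b) h
        simpa only [Category.assoc, m2] using this
    obtain ⟨d, -, hd⟩ := hg m hm (k ≫ e) n (by
      obtain ⟨z, -, hz⟩ := hW.lift (g ≫ IY.p) (g ≫ IY.q)
      rw [hz ((k ≫ e) ≫ m), hz (g ≫ n)]
      · simp [n1, n2]
      · simp only [Category.assoc, m1, m2, e1, e2]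
        rw [← k11, ← k22, ← hk1, ← hk2]
        simp)
    exact ⟨d, by rw [← m1, ← Category.assoc, hd, n1], by rw [← m2, ← Category.assoc, hd, n2]⟩

theorem composite_exists {C : Type u} [Category.{v} C] [OrdEnrichment C] (hC : IsRegularOrd C)
    {X Y Z : C} (R : RelStr X Y) (S : RelStr Y Z) : ∃ T, IsCompositeRel R S T := by
  obtain ⟨P, p₁, p₂, hP⟩ := hC.has2Pullbacks R.q S.p
  obtain ⟨W, a, b, hW⟩ := hC.has2Products X Z
  obtain ⟨n, ⟨n1, n2⟩, _⟩ := hW.lift (p₁ ≫ R.p) (p₂ ≫ S.q)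
  obtain ⟨I, e, m, he, hm, hem⟩ := hC.fact n
  refine ⟨⟨I, m ≫ a, m ≫ b, fun s s' h1 h2 => hm.1 s s' ?_, fun s s' h1 h2 => ?_⟩,
    P, p₁, p₂, e, hP, he, ?_, ?_⟩
  · exact hW.lift_ord (by simpa using h1) (by simpa using h2)
  · haveI := hm.2
    rw [← cancel_mono m]
    obtain ⟨z, -, hz⟩ := hW.lift (s ≫ m ≫ a) (s ≫ m ≫ b)
    rw [hz (s ≫ m) (by simp), hz (s' ≫ m) (by simp [h1, h2])]
  · change e ≫ m ≫ a = _
    rw [← Category.assoc, hem, n1]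
  · change e ≫ m ≫ b = _
    rw [← Category.assoc, hem, n2]

theorem so_part_b {C : Type u} [Category.{v} C] [OrdEnrichment C] (hC : IsRegularOrd C)
    {X Y : C} (f : X ⟶ Y)
    (IY : RelStr Y Y) (hIY : IsIdRel Y IY)
    (Fstar : RelStr X Y) (hFstar : IsStarRel f Fstar)
    (Fco : RelStr Y X) (hFco : IsCostarRel f Fco)
    (anti : ∀ (A B : C) (u v : A ⟶ B), u ≼ v → v ≼ u → u = v)
    (T : RelStr Y Y) (hT : IsCompositeRel Fco Fstar T) (hI : T.Iso IY) : IsSO f := by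
  obtain ⟨P, p₁, p₂, e, hP, he, e1, e2⟩ := hT
  obtain ⟨-, φ, φ1, φ2⟩ := hI
  obtain ⟨r, ⟨r1, r2⟩, _⟩ := hIY.lift (𝟙 Y) (𝟙 Y) (OrdEnrichment.ord_refl _)
  obtain ⟨Q, g, h, hQ⟩ := hC.has2Pullbacks (r ≫ φ) e
  have hg : IsSO g := hC.so_pullback_stable _ _ _ _ hQ he
  have g1 : h ≫ p₁ ≫ Fco.p = g := by
    rw [← e1, ← Category.assoc, ← hQ.comm]; simp [φ1, r1]
  have g2 : h ≫ p₂ ≫ Fstar.q = g := by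
    rw [← e2, ← Category.assoc, ← hQ.comm]; simp [φ2, r2]
  have h1 := OrdEnrichment.precomp_ord (h ≫ p₁) hFco.le
  have h2 := OrdEnrichment.precomp_ord (h ≫ p₂) hFstar.le
  simp only [Category.comp_id, Category.assoc, g1, g2] at h1 h2
  have hc : p₁ ≫ Fco.q ≫ f = p₂ ≫ Fstar.p ≫ f := by
    rw [← Category.assoc, hP.comm, Category.assoc]
  rw [← hc] at h2
  have hx := anti _ _ _ _ h1 h2
  intro A B m hm u v huv
  haveI := hm.2
  obtain ⟨d, -, hd⟩ := hg m hm (h ≫ p₁ ≫ Fco.q ≫ u) v (by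
    simp only [Category.assoc, huv]
    conv_rhs => rw [hx]
    simp)
  refine ⟨d, ?_, hd⟩
  rw [← cancel_mono m, Category.assoc, hd, huv]

/-- (a) If `f` is an so-morphism then `f_* ∘ f^* ≅ I_Y`; (b) if moreover the
hom-preorders are partial orders, `f` is an so-morphism iff `f_* ∘ f^* ≅ I_Y`. -/
theorem statement3 {C : Type u} [Category.{v} C] [OrdEnrichment C] (hC : IsRegularOrd C)
    {X Y : C} (f : X ⟶ Y)
    (IY : RelStr Y Y) (hIY : IsIdRel Y IY)
    (Fstar : RelStr X Y) (hFstar : IsStarRel f Fstar)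
    (Fco : RelStr Y X) (hFco : IsCostarRel f Fco) :
    (IsSO f → ∀ T : RelStr Y Y, IsCompositeRel Fco Fstar T → T.Iso IY) ∧
    ((∀ (A B : C) (u v : A ⟶ B), u ≼ v → v ≼ u → u = v) →
      (IsSO f ↔ ∀ T : RelStr Y Y, IsCompositeRel Fco Fstar T → T.Iso IY)) := by
  refine ⟨fun hf T hT => so_part_a hC f IY hIY Fstar hFstar Fco hFco hf T hT, fun anti =>
    ⟨fun hf T hT => so_part_a hC f IY hIY Fstar hFstar Fco hFco hf T hT, fun H => ?_⟩⟩
  obtain ⟨T, hT⟩ := composite_exists hC Fco Fstar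
  exact so_part_b hC f IY hIY Fstar hFstar Fco hFco anti T hT (H T hT)
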